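/- Let ψ : ℝ → (0,∞) be a continuous probability density with respect to Lebesgue measure satisfying ψ(−s) = ψ(s) for all s ∈ ℝ and ψ(s₁) ≥ ψ(s₂) whenever 0 ≤ s₁ < s₂; for β > 0 set ψ_β(s) := β·ψ(βs). Let h : ℝ → (0,∞) be a strictly positive measurable probability density and X a real-valued random variable whose law has density h with respect to Lebesgue measure. Then (a) the map f ↦ ∫_ℝ sup_{t∈[0,1]} ( |f(t)| · ψ_β(s−t) ) ds is a norm on C([0,1], ℝ), and (b) for every f ∈ C([0,1], ℝ), E[ sup_{t∈[0,1]} |f(t)| · ψ_β(X−t)/h(X) ] = ∫_ℝ sup_{t∈[0,1]} ( |f(t)| · ψ_β(s−t) ) ds, and this quantity is finite. -/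

import Mathlib

open MeasureTheory unitInterval

/-!
The supremum `⨆ t, |f t| * ψ_β (s - t)` is, for each fixed `s`, a norm of `f`, so only finiteness
and definiteness of its integral over `s` need an argument. If `t` ranges over a bounded set
`K ⊆ [a, b]`, unimodality bounds `ψ_β (s - t)` by `ψ_β 0` for `s ∈ [a, b]`, by `ψ_β (s - a)` to the
left of `[a, b]` and by `ψ_β (s - b)` to the right of it, and the sum of these three bounds is
integrable. Definiteness holds because the integral dominates `|f t| * ∫ ψ_β (s - t) ds = |f t|` for
every `t`. The formula for the expectation is a change of density, in which `h` cancels.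
-/

section WeightedSup

variable {T : Type*} [TopologicalSpace T]

/-- The supremum seminorm with weight `κ` on continuous functions. It takes the junk value `0` when
the weighted function is unbounded, which cannot happen for `T` compact and `κ` continuous. -/
noncomputable def weightedSup (κ : T → ℝ) (f : C(T, ℝ)) : ℝ :=
  ⨆ t, |f t| * κ t

lemma weightedSup_zero (κ : T → ℝ) : weightedSup κ 0 = 0 := by
  simp [weightedSup]

lemma weightedSup_smul (κ : T → ℝ) (c : ℝ) (f : C(T, ℝ)) :
    weightedSup κ (c • f) = |c| * weightedSup κ f := by
  simp only [weightedSup, Real.mul_iSup_of_nonneg (abs_nonneg c), ContinuousMap.smul_apply,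
    smul_eq_mul, abs_mul, mul_assoc]

lemma weightedSup_div (κ : T → ℝ) {c : ℝ} (hc : 0 ≤ c) (f : C(T, ℝ)) :
    weightedSup (fun t => κ t / c) f = weightedSup κ f / c := by
  simp only [weightedSup, div_eq_mul_inv, Real.iSup_mul_of_nonneg (inv_nonneg.2 hc), mul_assoc]

lemma weightedSup_nonneg {κ : T → ℝ} (hκ : 0 ≤ κ) (f : C(T, ℝ)) : 0 ≤ weightedSup κ f :=
  Real.iSup_nonneg fun t => mul_nonneg (abs_nonneg _) (hκ t)

variable [CompactSpace T]

lemma weightedSup_le_norm_mul {κ : T → ℝ} {C : ℝ} (hC : 0 ≤ C) (hκC : ∀ t, κ t ≤ C)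
    (f : C(T, ℝ)) : weightedSup κ f ≤ ‖f‖ * C := by
  refine Real.iSup_le (fun t => ?_) (by positivity)
  calc |f t| * κ t ≤ |f t| * C := mul_le_mul_of_nonneg_left (hκC t) (abs_nonneg _)
    _ ≤ ‖f‖ * C := mul_le_mul_of_nonneg_right (f.norm_coe_le_norm t) hC

lemma abs_mul_le_weightedSup {κ : T → ℝ} (hκ : Continuous κ) (f : C(T, ℝ)) (t : T) :
    |f t| * κ t ≤ weightedSup κ f :=
  le_ciSup (f := fun t => |f t| * κ t) (isCompact_range (by fun_prop)).bddAbove t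

lemma weightedSup_add_le {κ : T → ℝ} (hκ_cont : Continuous κ) (hκ : 0 ≤ κ) (f g : C(T, ℝ)) :
    weightedSup κ (f + g) ≤ weightedSup κ f + weightedSup κ g := by
  refine Real.iSup_le (fun t => ?_)
    (add_nonneg (weightedSup_nonneg hκ f) (weightedSup_nonneg hκ g))
  calc |(f + g) t| * κ t ≤ (|f t| + |g t|) * κ t :=
        mul_le_mul_of_nonneg_right (abs_add_le _ _) (hκ t)
    _ = |f t| * κ t + |g t| * κ t := add_mul _ _ _
    _ ≤ weightedSup κ f + weightedSup κ g :=
        add_le_add (abs_mul_le_weightedSup hκ_cont f t) (abs_mul_le_weightedSup hκ_cont g t)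

lemma continuous_weightedSup {S : Type*} [TopologicalSpace S] {k : S → T → ℝ}
    (hk : Continuous (Function.uncurry k)) (f : C(T, ℝ)) :
    Continuous fun s => weightedSup (k s) f := by
  have hfk : Continuous (Function.uncurry fun s t => |f t| * k s t) :=
    (f.continuous.comp continuous_snd).abs.mul hk
  simpa only [weightedSup, Set.image_univ, sSup_range] using isCompact_univ.continuous_sSup hfk

end WeightedSup

section DNorm

variable {S T : Type*} [MeasurableSpace S] [TopologicalSpace T] {μ : Measure S} {k : S → T → ℝ}

/-- The D-norm generated by the kernel `k` over `μ`, as an extended nonnegative number: if `μ` is a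
probability measure and every `k · t` has mean `1`, the process `t ↦ k · t` is its generator. -/
noncomputable def dNorm (μ : Measure S) (k : S → T → ℝ) (f : C(T, ℝ)) : ENNReal :=
  ∫⁻ s, ENNReal.ofReal (weightedSup (k s) f) ∂μ

lemma dNorm_zero : dNorm μ k 0 = 0 := by
  simp [dNorm, weightedSup_zero]

lemma dNorm_smul (c : ℝ) (f : C(T, ℝ)) :
    dNorm μ k (c • f) = ENNReal.ofReal |c| * dNorm μ k f := by
  simp only [dNorm, weightedSup_smul, ENNReal.ofReal_mul (abs_nonneg c),
    lintegral_const_mul' _ _ ENNReal.ofReal_ne_top]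

variable [CompactSpace T]

lemma dNorm_lt_top {g : S → ℝ} (hg : Integrable g μ) (hg_nonneg : 0 ≤ g)
    (hkg : ∀ s t, k s t ≤ g s) (f : C(T, ℝ)) : dNorm μ k f < ⊤ :=
  (lintegral_mono fun s => ENNReal.ofReal_le_ofReal
    (weightedSup_le_norm_mul (hg_nonneg s) (hkg s) f)).trans_lt (hg.const_mul ‖f‖).lintegral_lt_top

lemma dNorm_add_le [TopologicalSpace S] [OpensMeasurableSpace S]
    (hk_cont : Continuous (Function.uncurry k)) (hk : ∀ s, 0 ≤ k s) (f g : C(T, ℝ)) :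
    dNorm μ k (f + g) ≤ dNorm μ k f + dNorm μ k g := by
  rw [dNorm, dNorm, dNorm, ← lintegral_add_left
    (continuous_weightedSup hk_cont f).measurable.ennreal_ofReal]
  refine lintegral_mono fun s => ?_
  rw [← ENNReal.ofReal_add (weightedSup_nonneg (hk s) f) (weightedSup_nonneg (hk s) g)]
  exact ENNReal.ofReal_le_ofReal (weightedSup_add_le (hk_cont.uncurry_left s) (hk s) f g)

lemma ofReal_abs_mul_lintegral_le_dNorm (hk : ∀ s, Continuous (k s)) (f : C(T, ℝ)) (t : T) :
    ENNReal.ofReal |f t| * ∫⁻ s, ENNReal.ofReal (k s t) ∂μ ≤ dNorm μ k f := by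
  rw [← lintegral_const_mul' _ _ ENNReal.ofReal_ne_top]
  refine lintegral_mono fun s => ?_
  rw [← ENNReal.ofReal_mul (abs_nonneg _)]
  exact ENNReal.ofReal_le_ofReal (abs_mul_le_weightedSup (hk s) f t)

lemma dNorm_eq_zero_iff (hk : ∀ s, Continuous (k s))
    (hk_ne : ∀ t, ∫⁻ s, ENNReal.ofReal (k s t) ∂μ ≠ 0) {f : C(T, ℝ)} :
    dNorm μ k f = 0 ↔ f = 0 := by
  refine ⟨fun hf => ContinuousMap.ext fun t => ?_, fun hf => hf ▸ dNorm_zero⟩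
  have hft : ENNReal.ofReal |f t| = 0 :=
    (mul_eq_zero.1 <| le_zero_iff.1 <| hf ▸ ofReal_abs_mul_lintegral_le_dNorm hk f t).resolve_right
      (hk_ne t)
  exact abs_nonpos_iff.1 (ENNReal.ofReal_eq_zero.1 hft)

end DNorm

section ChangeOfDensity

variable {Ω S : Type*} [MeasurableSpace Ω] [MeasurableSpace S] {P : Measure Ω} {μ : Measure S}
  {h : S → ℝ} {X : Ω → S}

lemma lintegral_comp_div_density {F : S → ℝ} (hF : Measurable F) (hh : Measurable h)
    (hh_pos : ∀ x, 0 < h x) (hX : AEMeasurable X P)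
    (hX_law : P.map X = μ.withDensity fun x => ENNReal.ofReal (h x)) :
    ∫⁻ ω, ENNReal.ofReal (F (X ω) / h (X ω)) ∂P = ∫⁻ x, ENNReal.ofReal (F x) ∂μ := by
  have hFh : Measurable fun x => ENNReal.ofReal (F x / h x) := (hF.div hh).ennreal_ofReal
  rw [← lintegral_map' hFh.aemeasurable hX, hX_law,
    lintegral_withDensity_eq_lintegral_mul _ hh.ennreal_ofReal hFh]
  refine lintegral_congr fun x => ?_
  rw [Pi.mul_apply, ← ENNReal.ofReal_mul (hh_pos x).le, mul_div_cancel₀ _ (hh_pos x).ne']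

lemma lintegral_weightedSup_div_density {T : Type*} [TopologicalSpace T] [CompactSpace T]
    [TopologicalSpace S] [OpensMeasurableSpace S] {k : S → T → ℝ}
    (hk : Continuous (Function.uncurry k)) (hh : Measurable h) (hh_pos : ∀ x, 0 < h x)
    (hX : AEMeasurable X P) (hX_law : P.map X = μ.withDensity fun x => ENNReal.ofReal (h x))
    (f : C(T, ℝ)) :
    ∫⁻ ω, ENNReal.ofReal (weightedSup (fun t => k (X ω) t / h (X ω)) f) ∂P = dNorm μ k f := by
  simp only [weightedSup_div _ (hh_pos _).le]
  exact lintegral_comp_div_density (continuous_weightedSup hk f).measurable hh hh_pos hX hX_law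

end ChangeOfDensity

section Unimodal

variable {φ : ℝ → ℝ}

lemma monotoneOn_Iic_of_even (hφ_even : φ.Even) (hφ_anti : AntitoneOn φ (Set.Ici 0)) :
    MonotoneOn φ (Set.Iic 0) := fun x hx y hy hxy => by
  rw [← hφ_even x, ← hφ_even y]
  exact hφ_anti (Set.mem_Ici.2 (neg_nonneg.2 hy)) (Set.mem_Ici.2 (neg_nonneg.2 hx))
    (neg_le_neg hxy)

lemma translate_le_indicator_add_of_unimodal (hφ : 0 ≤ φ) (hφ_mono : MonotoneOn φ (Set.Iic 0))
    (hφ_anti : AntitoneOn φ (Set.Ici 0)) {a b t : ℝ} (ht : t ∈ Set.Icc a b) (s : ℝ) :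
    φ (s - t) ≤ (Set.Icc a b).indicator (fun _ => φ 0) s + φ (s - a) + φ (s - b) := by
  obtain ⟨hat, htb⟩ := ht
  have hφa : 0 ≤ φ (s - a) := hφ _
  have hφb : 0 ≤ φ (s - b) := hφ _
  have hφ_ind : 0 ≤ (Set.Icc a b).indicator (fun _ => φ 0) s :=
    Set.indicator_nonneg (fun _ _ => hφ 0) s
  rcases lt_or_ge s a with hsa | has
  · have : φ (s - t) ≤ φ (s - a) :=
      hφ_mono (Set.mem_Iic.2 (by linarith)) (Set.mem_Iic.2 (by linarith)) (by linarith)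
    linarith
  rcases lt_or_ge b s with hbs | hsb
  · have : φ (s - t) ≤ φ (s - b) :=
      hφ_anti (Set.mem_Ici.2 (by linarith)) (Set.mem_Ici.2 (by linarith)) (by linarith)
    linarith
  · have hφ_le : φ (s - t) ≤ φ 0 := (le_total (s - t) 0).elim
      (fun hst => hφ_mono hst Set.self_mem_Iic hst) (fun hst => hφ_anti Set.self_mem_Ici hst hst)
    rw [Set.indicator_of_mem (Set.mem_Icc.2 ⟨has, hsb⟩)]
    linarith

lemma exists_integrable_bound_translates_of_unimodal (hφ : 0 ≤ φ) (hφ_int : Integrable φ)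
    (hφ_mono : MonotoneOn φ (Set.Iic 0)) (hφ_anti : AntitoneOn φ (Set.Ici 0))
    {K : Set ℝ} (hK : Bornology.IsBounded K) :
    ∃ g : ℝ → ℝ, Integrable g ∧ 0 ≤ g ∧ ∀ s, ∀ t ∈ K, φ (s - t) ≤ g s := by
  have h_ind : Integrable ((Set.Icc (sInf K) (sSup K)).indicator fun _ => φ 0) :=
    (integrable_indicator_iff measurableSet_Icc).2 (integrableOn_const measure_Icc_lt_top.ne)
  refine ⟨_, (h_ind.add (hφ_int.comp_sub_right (sInf K))).add (hφ_int.comp_sub_right (sSup K)),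
    fun s => ?_, fun s t ht =>
      translate_le_indicator_add_of_unimodal hφ hφ_mono hφ_anti (hK.subset_Icc_sInf_sSup ht) s⟩
  exact add_nonneg (add_nonneg (Set.indicator_nonneg (fun _ _ => hφ 0) s) (hφ _)) (hφ _)

end Unimodal

section ScaledDensity

/-- The rescaled density `ψ_β` of the paper: for `β > 0`, the density of `Y / β` when `Y` has
density `ψ`. -/
noncomputable def scaledDensity (ψ : ℝ → ℝ) (β s : ℝ) : ℝ :=
  β * ψ (β * s)

variable {ψ : ℝ → ℝ} {β : ℝ}

lemma scaledDensity_nonneg (hψ : 0 ≤ ψ) (hβ : 0 ≤ β) : 0 ≤ scaledDensity ψ β :=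
  fun _ => mul_nonneg hβ (hψ _)

lemma continuous_scaledDensity (hψ : Continuous ψ) : Continuous (scaledDensity ψ β) := by
  unfold scaledDensity
  fun_prop

lemma monotoneOn_scaledDensity (hψ : MonotoneOn ψ (Set.Iic 0)) (hβ : 0 ≤ β) :
    MonotoneOn (scaledDensity ψ β) (Set.Iic 0) := fun _ hx _ hy hxy =>
  mul_le_mul_of_nonneg_left (hψ (mul_nonpos_of_nonneg_of_nonpos hβ hx)
    (mul_nonpos_of_nonneg_of_nonpos hβ hy) (mul_le_mul_of_nonneg_left hxy hβ)) hβ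

lemma antitoneOn_scaledDensity (hψ : AntitoneOn ψ (Set.Ici 0)) (hβ : 0 ≤ β) :
    AntitoneOn (scaledDensity ψ β) (Set.Ici 0) := fun _ hx _ hy hxy =>
  mul_le_mul_of_nonneg_left
    (hψ (mul_nonneg hβ hx) (mul_nonneg hβ hy) (mul_le_mul_of_nonneg_left hxy hβ)) hβ

lemma lintegral_scaledDensity (ψ : ℝ → ℝ) (hβ : 0 < β) :
    ∫⁻ s, ENNReal.ofReal (scaledDensity ψ β s) = ∫⁻ s, ENNReal.ofReal (ψ s) := by
  simp only [scaledDensity, ENNReal.ofReal_mul hβ.le,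
    lintegral_const_mul' _ _ ENNReal.ofReal_ne_top]
  conv_rhs => rw [← Real.smul_map_volume_mul_left hβ.ne', lintegral_smul_measure,
    (measurableEmbedding_mulLeft₀ hβ.ne').lintegral_map, abs_of_pos hβ, smul_eq_mul]

end ScaledDensity

theorem D_norm_shifted_density_general
    {Ω : Type*} [MeasurableSpace Ω] {P : Measure Ω} {K : Set ℝ} [CompactSpace K]
    {ψ : ℝ → ℝ} (hψ_cont : Continuous ψ) (hψ : 0 ≤ ψ)
    (hψ_dens : ∫⁻ s, ENNReal.ofReal (ψ s) = 1)
    (hψ_mono : MonotoneOn ψ (Set.Iic 0)) (hψ_anti : AntitoneOn ψ (Set.Ici 0))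
    {β : ℝ} (hβ : 0 < β) {h : ℝ → ℝ} (hh : Measurable h) (hh_pos : ∀ x, 0 < h x)
    {X : Ω → ℝ} (hX : AEMeasurable X P)
    (hX_law : P.map X = volume.withDensity fun x => ENNReal.ofReal (h x))
    {N : C(K, ℝ) → ENNReal}
    (hN : ∀ f, N f = dNorm volume (fun s (t : K) => scaledDensity ψ β (s - t)) f) :
    ((∀ f, N f < ⊤)
      ∧ (∀ (c : ℝ) (f), N (c • f) = ENNReal.ofReal |c| * N f)
      ∧ (∀ f₁ f₂, N (f₁ + f₂) ≤ N f₁ + N f₂)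
      ∧ (∀ f, N f = 0 ↔ f = 0))
    ∧ (∀ f : C(K, ℝ),
        ∫⁻ ω, ENNReal.ofReal
            (weightedSup (fun t : K => scaledDensity ψ β (X ω - t) / h (X ω)) f) ∂P
          = N f ∧ N f < ⊤) := by
  obtain rfl : N = _ := funext hN
  have hφ_nonneg := scaledDensity_nonneg hψ hβ.le
  have hφ_cont : Continuous (scaledDensity ψ β) := continuous_scaledDensity hψ_cont
  have hφ_dens := (lintegral_scaledDensity ψ hβ).trans hψ_dens
  have hφ_int : Integrable (scaledDensity ψ β) :=
    (lintegral_ofReal_ne_top_iff_integrable hφ_cont.aestronglyMeasurable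
      (ae_of_all _ hφ_nonneg)).1 (hφ_dens ▸ ENNReal.one_ne_top)
  obtain ⟨g, hg_int, hg_nonneg, hφg⟩ := exists_integrable_bound_translates_of_unimodal hφ_nonneg
    hφ_int (monotoneOn_scaledDensity hψ_mono hβ.le) (antitoneOn_scaledDensity hψ_anti hβ.le)
    (isCompact_iff_compactSpace.2 ‹CompactSpace K›).isBounded
  have hk_cont : Continuous (Function.uncurry fun (s : ℝ) (t : K) => scaledDensity ψ β (s - t)) :=
    hφ_cont.comp (by fun_prop)
  have hk_dens (t : K) : ∫⁻ s, ENNReal.ofReal (scaledDensity ψ β (s - t)) = 1 :=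
    (lintegral_sub_right_eq_self (fun s => ENNReal.ofReal (scaledDensity ψ β s)) (t : ℝ)).trans
      hφ_dens
  have hfin := dNorm_lt_top hg_int hg_nonneg fun s (t : K) => hφg s t t.2
  exact ⟨⟨hfin, dNorm_smul, dNorm_add_le hk_cont fun s t => hφ_nonneg (s - t),
    fun f => dNorm_eq_zero_iff hk_cont.uncurry_left fun t => (hk_dens t).trans_ne one_ne_zero⟩,
    fun f => ⟨lintegral_weightedSup_div_density hk_cont hh hh_pos hX hX_law f, hfin f⟩⟩

/-- For a continuous, symmetric, unimodal probability density `ψ > 0`,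
`β > 0`, `ψ_β(s) = β ψ(β s)`, a strictly positive density `h` and `X` with density `h`:
(a) `f ↦ ∫_ℝ sup_t (|f t| ψ_β(s - t)) ds` is a norm on `C([0,1], ℝ)`, and
(b) `E[sup_t |f t| ψ_β(X - t)/h(X)]` equals this quantity, which is finite. -/
theorem D_norm_shifted_density
    {Ω : Type*} [MeasurableSpace Ω] (P : Measure Ω) [IsProbabilityMeasure P]
    (ψ : ℝ → ℝ) (hψ_cont : Continuous ψ) (hψ_pos : ∀ s, 0 < ψ s)
    (hψ_dens : ∫⁻ s, ENNReal.ofReal (ψ s) = 1)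
    (hψ_symm : ∀ s, ψ (-s) = ψ s)
    (hψ_mono : ∀ s₁ s₂ : ℝ, 0 ≤ s₁ → s₁ < s₂ → ψ s₂ ≤ ψ s₁)
    (β : ℝ) (hβ : 0 < β)
    (h : ℝ → ℝ) (hh_meas : Measurable h) (hh_pos : ∀ x, 0 < h x)
    (hh_dens : ∫⁻ x, ENNReal.ofReal (h x) = 1)
    (X : Ω → ℝ) (hX_meas : Measurable X)
    (hX_law : Measure.map X P = volume.withDensity fun x => ENNReal.ofReal (h x))
    (N : C(I, ℝ) → ENNReal)
    (hN : ∀ f, N f = ∫⁻ s, ENNReal.ofReal (⨆ t : I, |f t| * (β * ψ (β * (s - t))))) :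
    ((∀ f, N f < ⊤)
      ∧ (∀ (c : ℝ) (f), N (c • f) = ENNReal.ofReal |c| * N f)
      ∧ (∀ f₁ f₂, N (f₁ + f₂) ≤ N f₁ + N f₂)
      ∧ (∀ f, N f = 0 ↔ f = 0))
    ∧ (∀ f : C(I, ℝ),
        ∫⁻ ω, ENNReal.ofReal (⨆ t : I, |f t| * (β * ψ (β * (X ω - t)) / h (X ω))) ∂P
          = N f ∧ N f < ⊤) := by
  have hψ_anti : AntitoneOn ψ (Set.Ici 0) :=
    antitoneOn_iff_forall_lt.2 fun s₁ hs₁ s₂ _ => hψ_mono s₁ s₂ hs₁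
  exact D_norm_shifted_density_general hψ_cont (fun s => (hψ_pos s).le) hψ_dens
    (monotoneOn_Iic_of_even hψ_symm hψ_anti) hψ_anti hβ hh_meas hh_pos
    hX_meas.aemeasurable hX_law hN
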